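/- Let f: G → G' be a circuit surjection where G is 2-connected and G' is not a circuit (i.e., the edge set of G' is not itself a single circuit). Then for every edge e of G', any circuit C of G containing at least one element of f⁻¹(e) contains every element of f⁻¹(e). -/

import Mathlib

/-- A *circuit* of a simple graph is the edge set of a cycle. -/
def SimpleGraph.IsCircuit {V : Type*} (G : SimpleGraph V) (C : Set (Sym2 V)) : Prop :=
  ∃ (v : V) (w : G.Walk v v), w.IsCycle ∧ C = {e | e ∈ w.edges}

/-- A graph is 2-connected (in the edge sense) if any two distinct edges lie on a
common circuit. -/
def TwoConnectedE {V : Type*} (G : SimpleGraph V) : Prop :=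
  ∀ e₁ ∈ G.edgeSet, ∀ e₂ ∈ G.edgeSet, e₁ ≠ e₂ →
    ∃ C, G.IsCircuit C ∧ e₁ ∈ C ∧ e₂ ∈ C

structure BinSys {α : Type*} [DecidableEq α] (Ev C : Finset α → Prop) : Prop where
  symm : ∀ S T, Ev S → Ev T → Ev (symmDiff S T)
  ev : ∀ K, C K → Ev K
  ne : ∀ K, C K → K.Nonempty
  ex : ∀ S, Ev S → ∀ s ∈ S, ∃ K, C K ∧ K ⊆ S ∧ s ∈ K
  mini : ∀ K S, C K → Ev S → S ⊆ K → S = ∅ ∨ S = K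

section
variable {α β : Type*} [DecidableEq α] [DecidableEq β] {Ev C : Finset α → Prop}
  {Ev' C' : Finset β → Prop}

lemma BinSys.image_eq (B' : BinSys Ev' C') (f : α → β)
    (hf : ∀ K, C K → C' (K.image f)) {X Y Z : Finset α} (hX : C X) (hY : C Y) (hZ : C Z)
    (h : ∀ a, a ∈ X → a ∉ Y → a ∈ Z) (h' : ∀ a, a ∈ Y → a ∉ X → a ∈ Z)
    {g : β} (gX : g ∈ X.image f) (gY : g ∈ Y.image f) (gZ : g ∈ Z.image f) :
    X.image f = Y.image f := by
  have hsub : symmDiff (X.image f) (Y.image f) ⊆ Z.image f := by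
    intro b hb
    rw [Finset.mem_symmDiff] at hb
    simp only [Finset.mem_image] at hb ⊢
    grind
  rcases B'.mini _ _ (hf _ hZ) (B'.symm _ _ (B'.ev _ (hf _ hX)) (B'.ev _ (hf _ hY))) hsub with h0 | h0
  · rwa [← Finset.bot_eq_empty, symmDiff_eq_bot] at h0
  · rw [← h0, Finset.mem_symmDiff] at gZ
    tauto

/-- Sets `S` with all theta triple data; `T₁ T₂ T₃` are the three circuits of a theta. -/
structure BinTheta (C Ev : Finset α → Prop) (T₁ T₂ T₃ : Finset α) : Prop where
  c₁ : C T₁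
  c₂ : C T₂
  c₃ : C T₃
  eq : ∀ a, a ∈ T₃ ↔ (a ∈ T₁ ∧ a ∉ T₂) ∨ (a ∈ T₂ ∧ a ∉ T₁)
  cls : ∀ S, Ev S → (∀ a ∈ S, a ∈ T₁ ∨ a ∈ T₂) → S = ∅ ∨ S = T₁ ∨ S = T₂ ∨ S = T₃

lemma BinTheta.rot {T₁ T₂ T₃ : Finset α} (h : BinTheta C Ev T₁ T₂ T₃) : BinTheta C Ev T₂ T₃ T₁ := by
  obtain ⟨c₁, c₂, c₃, eq, cls⟩ := h
  refine ⟨c₂, c₃, c₁, ?_, ?_⟩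
  · intro a; have := eq a; tauto
  · intro S hS h
    have := cls S hS (fun a ha => by have := h a ha; have := eq a; tauto)
    tauto

lemma BinSys.exists_theta (B : BinSys Ev C) {T K₀ : Finset α} (hT : C T) (hK₀ : C K₀) {x y : α}
    (hx : x ∈ T) (hxK : x ∈ K₀) (hy : y ∉ T) (hyK : y ∈ K₀) :
    ∃ T₂ T₃, BinTheta C Ev T T₂ T₃ ∧ y ∈ T₂ := by
  classical
  obtain ⟨n, hn⟩ : ∃ n, n = sInf {n | ∃ K, C K ∧ y ∈ K ∧ (K ∩ T).Nonempty ∧ (K \ T).card = n} := ⟨_, rfl⟩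
  have hne : {n | ∃ K, C K ∧ y ∈ K ∧ (K ∩ T).Nonempty ∧ (K \ T).card = n}.Nonempty :=
    ⟨_, K₀, hK₀, hyK, ⟨x, by simp [hx, hxK]⟩, rfl⟩
  obtain ⟨K, hK, yK, hKT, hcard⟩ := Nat.sInf_mem hne
  have hmin : ∀ L, C L → y ∈ L → (L ∩ T).Nonempty → (L \ T) ⊆ (K \ T) → L \ T = K \ T := by
    intro L hL hyL hLT hsub
    refine Finset.eq_of_subset_of_card_le hsub ?_
    rw [hcard]
    exact Nat.sInf_le ⟨L, hL, hyL, hLT, rfl⟩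
  -- every even subset of the union through `y` contains `K \ T`
  have key : ∀ S, Ev S → S ⊆ K ∪ T → y ∈ S → ∃ L, C L ∧ L ⊆ S ∧ y ∈ L ∧ L \ T = K \ T ∧ (L ∩ T).Nonempty := by
    intro S hS hSs hyS
    obtain ⟨L, hL, hLS, hyL⟩ := B.ex S hS y hyS
    have hne : (L ∩ T).Nonempty := by
      by_contra hcon
      rw [Finset.not_nonempty_iff_eq_empty] at hcon
      have : L ⊆ K := by
        intro a ha
        have e1 := hSs (hLS ha)
        have e3 : a ∉ T := fun h => by
          have : a ∈ L ∩ T := by simp [ha, h]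
          simp [hcon] at this
        rw [Finset.mem_union] at e1
        exact e1.resolve_right e3
      rcases B.mini K L hK (B.ev _ hL) this with h | h
      · grind
      · subst h; grind
    exact ⟨L, hL, hLS, hyL, hmin L hL hyL hne (by grind), hne⟩
  have hcirc : C (symmDiff T K) := by
    obtain ⟨L, hL, hLS, hyL, h1, h2⟩ := key (symmDiff T K) (B.symm _ _ (B.ev _ hT) (B.ev _ hK))
      (by intro a; simp only [Finset.mem_symmDiff, Finset.mem_union]; tauto)
      (by simp only [Finset.mem_symmDiff]; tauto)
    have h3 : symmDiff (symmDiff T K) L ⊆ T := by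
      intro a ha
      simp only [Finset.mem_symmDiff] at ha
      by_contra haT
      have h4 := congrArg (a ∈ ·) h1
      simp only [Finset.mem_sdiff] at h4
      grind
    rcases B.mini T _ hT (B.symm _ _ (B.symm _ _ (B.ev _ hT) (B.ev _ hK)) (B.ev _ hL)) h3 with h | h
    · rw [← Finset.bot_eq_empty, symmDiff_eq_bot] at h
      rwa [h]
    · exfalso
      obtain ⟨a, ha⟩ := h2
      have h5 : a ∈ symmDiff (symmDiff T K) L := by rw [h]; grind
      have := @hLS a
      simp only [Finset.mem_symmDiff] at h5 this
      grind
  have hsmall : ∀ S, Ev S → S ⊆ K ∪ T → y ∉ S → S = ∅ ∨ S = T := by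
    intro S hS hSs hyS
    obtain ⟨L, hL, hLS, hyL, h1, h2⟩ := key (symmDiff S K) (B.symm _ _ hS (B.ev _ hK))
      (by intro a; have := @hSs a; simp only [Finset.mem_symmDiff, Finset.mem_union] at *; tauto)
      (by simp only [Finset.mem_symmDiff]; tauto)
    refine B.mini T S hT hS ?_
    intro a ha
    by_contra haT
    have h4 := congrArg (a ∈ ·) h1
    have h5 := @hLS a
    have := @hSs a
    simp only [Finset.mem_sdiff, Finset.mem_symmDiff, Finset.mem_union] at h4 h5 this
    grind
  refine ⟨K, symmDiff T K, ⟨hT, hK, hcirc, ?_, ?_⟩, yK⟩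
  · intro a; simp only [Finset.mem_symmDiff]
  · intro S hS hsub
    by_cases hyS : y ∈ S
    · have := hsmall (symmDiff S K) (B.symm _ _ hS (B.ev _ hK))
        (by intro a; have := hsub a; simp only [Finset.mem_symmDiff, Finset.mem_union] at *; tauto)
        (by simp only [Finset.mem_symmDiff]; tauto)
      rcases this with h | h
      · rw [← Finset.bot_eq_empty, symmDiff_eq_bot] at h
        tauto
      · right; right; right
        rw [← h, symmDiff_symmDiff_cancel_right]
    · have := hsmall S hS (by intro a ha; have := hsub a ha; simp only [Finset.mem_union]; tauto) hyS
      tauto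

set_option maxHeartbeats 2000000 in
lemma BinSys.arc_case (B : BinSys Ev C) (B' : BinSys Ev' C') (f : α → β)
    (hf : ∀ K, C K → C' (K.image f)) {T₁ T₂ T₃ K : Finset α} (hT : BinTheta C Ev T₁ T₂ T₃)
    {D : Finset β} (h₁ : T₁.image f = D) (h₂ : T₂.image f = D) (h₃ : T₃.image f = D)
    (hK : C K) (hKD : K.image f ≠ D)
    (hdec : ∀ S, C S → (∀ a ∈ S, a ∈ T₁ ∨ a ∈ T₂) → ∃ L, C L ∧ L ⊆ symmDiff K S ∧
      ∀ a ∈ symmDiff K S, a ∉ L → a ∈ T₁ ∨ a ∈ T₂)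
    (hne : ∃ a ∈ K, a ∈ T₁ ∨ a ∈ T₂) (hdis : Disjoint K T₃) : False := by
  obtain ⟨a, haK, ha⟩ := hne
  have haT₃ : a ∉ T₃ := Finset.disjoint_left.1 hdis haK
  have ha₁ : a ∈ T₁ := by have := hT.eq a; tauto
  have ha₂ : a ∈ T₂ := by have := hT.eq a; tauto
  have hc : ∀ S, S = T₁ ∨ S = T₂ → C (symmDiff K S) := by
    intro S hS
    have hCS : C S := by rcases hS with rfl | rfl; exacts [hT.c₁, hT.c₂]
    obtain ⟨L, hL, hLs, hR⟩ := hdec S hCS (by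
      rcases hS with rfl | rfl
      · exact fun a h => Or.inl h
      · exact fun a h => Or.inr h)
    have hRe : Ev (symmDiff (symmDiff K S) L) :=
      B.symm _ _ (B.symm _ _ (B.ev _ hK) (B.ev _ hCS)) (B.ev _ hL)
    have hRS : symmDiff (symmDiff K S) L ⊆ S := by
      intro b hb
      have e1 := hR b
      have e2 := @hLs b
      have e3 := hT.eq b
      have e4 : b ∈ K → b ∉ T₃ := fun h => Finset.disjoint_left.1 hdis h
      simp only [Finset.mem_symmDiff] at hb e1 e2
      clear hdec hR hLs hRe hKD h₁ h₂ h₃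
      rcases hS with rfl | rfl <;> grind
    rcases B.mini S _ hCS hRe hRS with h | h
    · rw [← Finset.bot_eq_empty, symmDiff_eq_bot] at h
      rwa [h]
    · exfalso
      have haS : a ∈ S := by rcases hS with rfl | rfl <;> assumption
      rw [← h] at haS
      have e2 := @hLs a
      simp only [Finset.mem_symmDiff] at haS e2
      clear hR hdec hLs hRe h
      rcases hS with rfl | rfl <;> grind
  have hno : ∀ S, S = T₁ ∨ S = T₂ → ∀ g, g ∈ K.image f → g ∈ (symmDiff K S).image f → g ∈ D → False := by
    intro S hS g g1 g2 g3
    have hSD : S.image f = D := by rcases hS with rfl | rfl <;> assumption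
    have hCS : C S := by rcases hS with rfl | rfl; exacts [hT.c₁, hT.c₂]
    apply hKD
    rw [← hSD] at g3 ⊢
    refine B'.image_eq f hf hK hCS (hc S hS) ?_ ?_ g1 g3 g2 <;>
      (intro b; simp only [Finset.mem_symmDiff]; tauto)
  have hfa : f a ∈ D := by rw [← h₁]; exact Finset.mem_image_of_mem f ha₁
  have hfa' := hfa
  rw [← h₃, Finset.mem_image] at hfa'
  obtain ⟨b, hb, hbf⟩ := hfa'
  have hbK : b ∉ K := fun h => Finset.disjoint_left.1 hdis h hb
  rcases (hT.eq b).1 hb with h | h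
  · refine hno T₁ (Or.inl rfl) (f a) (Finset.mem_image_of_mem f haK) ?_ hfa
    rw [← hbf]; apply Finset.mem_image_of_mem
    simp only [Finset.mem_symmDiff]; tauto
  · refine hno T₂ (Or.inr rfl) (f a) (Finset.mem_image_of_mem f haK) ?_ hfa
    rw [← hbf]; apply Finset.mem_image_of_mem
    simp only [Finset.mem_symmDiff]; tauto

set_option maxHeartbeats 2000000 in
lemma BinSys.theta_false (B : BinSys Ev C) (B' : BinSys Ev' C') (f : α → β)
    (hf : ∀ K, C K → C' (K.image f)) {T₁ T₂ T₃ K₀ : Finset α} (hT : BinTheta C Ev T₁ T₂ T₃)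
    {D : Finset β} (h₁ : T₁.image f = D) (h₂ : T₂.image f = D) (h₃ : T₃.image f = D)
    {z : α} (hz : f z ∉ D) (hK₀ : C K₀) (hzK₀ : z ∈ K₀) (hne₀ : ∃ a ∈ K₀, a ∈ T₁ ∨ a ∈ T₂) :
    False := by
  classical
  obtain ⟨H, hH⟩ : ∃ H, H = T₁ ∪ T₂ := ⟨_, rfl⟩
  have hmH : ∀ a, a ∈ H ↔ a ∈ T₁ ∨ a ∈ T₂ := by intro a; rw [hH, Finset.mem_union]
  have hTH : ∀ S, S = T₁ ∨ S = T₂ ∨ S = T₃ → S.image f = D ∧ C S ∧ S ⊆ H := by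
    rintro S (rfl | rfl | rfl)
    · exact ⟨h₁, hT.c₁, fun a => by rw [hmH]; tauto⟩
    · exact ⟨h₂, hT.c₂, fun a => by rw [hmH]; tauto⟩
    · exact ⟨h₃, hT.c₃, fun a => by rw [hmH, hT.eq]; tauto⟩
  have hzH : z ∉ H := by
    intro h
    rcases (hmH z).1 h with h | h
    · exact hz (h₁ ▸ Finset.mem_image_of_mem f h)
    · exact hz (h₂ ▸ Finset.mem_image_of_mem f h)
  have hfH : ∀ a ∈ H, f a ∈ D := by
    intro a h
    rcases (hmH a).1 h with h | h
    · exact (h₁ ▸ Finset.mem_image_of_mem f h)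
    · exact (h₂ ▸ Finset.mem_image_of_mem f h)
  let P : Finset α → Prop := fun K => C K ∧ z ∈ K ∧ (K ∩ H).Nonempty
  have hne : {n | ∃ K, P K ∧ (K \ H).card = n}.Nonempty := by
    obtain ⟨a, ha, ha'⟩ := hne₀
    exact ⟨_, K₀, ⟨hK₀, hzK₀, ⟨a, by rw [Finset.mem_inter, hmH]; tauto⟩⟩, rfl⟩
  obtain ⟨K, ⟨hK, hzK, hKH⟩, hcard⟩ := Nat.sInf_mem hne
  have hmin : ∀ L, P L → (L \ H) ⊆ (K \ H) → L \ H = K \ H := by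
    intro L hL hsub
    refine Finset.eq_of_subset_of_card_le hsub ?_
    rw [hcard]
    exact Nat.sInf_le ⟨L, hL, rfl⟩
  have dec : ∀ K', P K' → K' \ H = K \ H → ∀ S, S ⊆ H → Ev S → ∃ L, P L ∧ L \ H = K \ H ∧
      L ⊆ symmDiff K' S ∧ ∀ a ∈ symmDiff K' S, a ∉ L → a ∈ H := by
    rintro K' ⟨hK', hzK', hKH'⟩ heq S hSH hS
    have hzS : z ∉ S := fun h => hzH (hSH h)
    obtain ⟨L, hL, hLS, hzL⟩ := B.ex (symmDiff K' S) (B.symm _ _ (B.ev _ hK') hS) z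
      (by simp only [Finset.mem_symmDiff]; tauto)
    have hLH : (L ∩ H).Nonempty := by
      by_contra hcon
      rw [Finset.not_nonempty_iff_eq_empty] at hcon
      have : L ⊆ K' := by
        intro a ha
        have e1 := hLS ha
        have e2 := @hSH a
        have e3 : a ∉ H := fun h => by
          have : a ∈ L ∩ H := by simp [ha, h]
          simp [hcon] at this
        simp only [Finset.mem_symmDiff] at e1; tauto
      rcases B.mini K' L hK' (B.ev _ hL) this with h | h
      · simp [h] at hzL
      · subst h; simp [hcon] at hKH'
    have hLe : L \ H = K \ H := by
      refine hmin L ⟨hL, hzL, hLH⟩ ?_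
      rw [← heq]
      intro a ha
      have e2 := @hSH a
      have e1 := @hLS a
      simp only [Finset.mem_sdiff, Finset.mem_symmDiff] at *; tauto
    refine ⟨L, ⟨hL, hzL, hLH⟩, hLe, hLS, ?_⟩
    intro a ha haL
    by_contra haH
    have e0 := congrArg (a ∈ ·) (hLe.trans heq.symm)
    have e2 := @hSH a
    simp only [Finset.mem_sdiff, Finset.mem_symmDiff, eq_iff_iff] at *; tauto
  have hKD : ∀ L : Finset α, z ∈ L → L.image f ≠ D := fun L hL h =>
    hz (h ▸ Finset.mem_image_of_mem f hL)
  -- the single arc case cannot occur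
  have harc : ∀ K', P K' → K' \ H = K \ H → ∀ R, R = T₁ ∨ R = T₂ ∨ R = T₃ → Disjoint K' R → False := by
    intro K' hPK' heq R hR hdis
    obtain ⟨a, ha⟩ := hPK'.2.2
    rw [Finset.mem_inter] at ha
    have hd : ∀ S, C S → (∀ a ∈ S, a ∈ H) → ∃ L, C L ∧ L ⊆ symmDiff K' S ∧ ∀ a ∈ symmDiff K' S, a ∉ L → a ∈ H := by
      intro S hS hSH
      obtain ⟨L, hL, -, h⟩ := dec K' hPK' heq S hSH (B.ev _ hS)
      exact ⟨L, hL.1, h⟩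
    rcases hR with rfl | rfl | rfl
    · have hm : ∀ a, a ∈ T₂ ∨ a ∈ T₃ ↔ a ∈ H := by intro a; rw [hmH, hT.eq]; tauto
      refine B.arc_case B' f hf hT.rot h₂ h₃ h₁ hPK'.1 (hKD _ hPK'.2.1) ?_ ⟨a, ?_⟩ hdis
      · simpa only [hm] using hd
      · simpa only [hm] using ha
    · have hm : ∀ a, a ∈ T₃ ∨ a ∈ T₁ ↔ a ∈ H := by intro a; rw [hmH, hT.eq]; tauto
      refine B.arc_case B' f hf hT.rot.rot h₃ h₁ h₂ hPK'.1 (hKD _ hPK'.2.1) ?_ ⟨a, ?_⟩ hdis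
      · simpa only [hm] using hd
      · simpa only [hm] using ha
    · refine B.arc_case B' f hf hT h₁ h₂ h₃ hPK'.1 (hKD _ hPK'.2.1) ?_ ⟨a, ?_⟩ hdis
      · simpa only [← hmH] using hd
      · simpa only [← hmH] using ha
  have hsum : ∀ S, S = T₁ ∨ S = T₂ ∨ S = T₃ → C (symmDiff K S) := by
    intro S hS
    obtain ⟨-, hCS, hSH⟩ := hTH S hS
    obtain ⟨L, hPL, hLe, hLS, hR⟩ := dec K ⟨hK, hzK, hKH⟩ rfl S hSH (B.ev _ hCS)
    have hRe : Ev (symmDiff (symmDiff K S) L) :=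
      B.symm _ _ (B.symm _ _ (B.ev _ hK) (B.ev _ hCS)) (B.ev _ hPL.1)
    have hdis : Disjoint L (symmDiff (symmDiff K S) L) := by
      rw [Finset.disjoint_left]
      intro a ha h
      have := hLS ha
      rw [Finset.mem_symmDiff] at h
      tauto
    rcases hT.cls _ hRe (by
      intro a ha
      have e1 := hR a
      have e2 := @hLS a
      rw [← hmH]
      rw [Finset.mem_symmDiff] at ha
      tauto) with h | h
    · rw [← Finset.bot_eq_empty, symmDiff_eq_bot] at h
      rw [h]; exact hPL.1
    · exact (harc L hPL hLe _ h hdis).elim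
  have hin : ∀ S, S = T₁ ∨ S = T₂ ∨ S = T₃ → ∀ a ∈ K, a ∈ H → a ∈ S := by
    intro S hS a haK haH
    by_contra haS
    obtain ⟨hSD, hCS, hSH⟩ := hTH S hS
    apply hKD K hzK
    rw [← hSD]
    refine B'.image_eq f hf (g := f a) hK hCS (hsum S hS) ?_ ?_ (Finset.mem_image_of_mem f haK)
      (hSD ▸ hfH a haH) (Finset.mem_image_of_mem f ?_)
    · intro b; simp only [Finset.mem_symmDiff]; tauto
    · intro b; simp only [Finset.mem_symmDiff]; tauto
    · simp only [Finset.mem_symmDiff]; tauto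
  obtain ⟨a, ha⟩ := hKH
  rw [Finset.mem_inter] at ha
  have e1 := hin T₁ (Or.inl rfl) a ha.1 ha.2
  have e2 := hin T₂ (Or.inr (Or.inl rfl)) a ha.1 ha.2
  have e3 := hin T₃ (Or.inr (Or.inr rfl)) a ha.1 ha.2
  have := (hT.eq a).1 e3
  rcases this with h | h
  · exact h.2 e2
  · exact h.2 e1

lemma BinSys.main (B : BinSys Ev C) (B' : BinSys Ev' C') (f : α → β)
    (hf : ∀ K, C K → C' (K.image f)) (M : Set α) (hM : ∀ K, C K → ∀ a ∈ K, a ∈ M)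
    (hconn : ∀ a ∈ M, ∀ b ∈ M, a ≠ b → ∃ K, C K ∧ a ∈ K ∧ b ∈ K)
    (hnot : ∀ K, C K → ∃ z ∈ M, f z ∉ K.image f)
    {T : Finset α} (hT : C T) {x y : α} (hx : x ∈ T) (hyM : y ∈ M) (hxy : f x = f y) : y ∈ T := by
  by_contra hy
  obtain ⟨K₀, hK₀, hxK, hyK⟩ := hconn x (hM T hT x hx) y hyM (by rintro rfl; exact hy hx)
  obtain ⟨T₂, T₃, hth, hyT⟩ := B.exists_theta hT hK₀ hx hxK hy hyK
  have g1 : f x ∈ T.image f := Finset.mem_image_of_mem f hx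
  have g2 : f x ∈ T₂.image f := hxy ▸ Finset.mem_image_of_mem f hyT
  have g3 : f x ∈ T₃.image f := hxy ▸ Finset.mem_image_of_mem f ((hth.eq y).2 (by tauto))
  have h2 : T₂.image f = T.image f := by
    refine B'.image_eq f hf hth.c₂ hth.c₁ hth.c₃ ?_ ?_ g2 g1 g3 <;>
      (intro a; have := hth.eq a; tauto)
  have h3 : T₃.image f = T.image f := by
    refine B'.image_eq f hf hth.c₃ hth.c₁ hth.c₂ ?_ ?_ g3 g1 g2 <;>
      (intro a; have := hth.eq a; tauto)
  obtain ⟨z, hzM, hz⟩ := hnot T hT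
  obtain ⟨K, hK, h1K, h2K⟩ := hconn x (hM T hT x hx) z hzM (by rintro rfl; exact hz g1)
  exact B.theta_false B' f hf hth rfl h2 h3 hz hK h2K ⟨x, h1K, Or.inl hx⟩
end

section
variable {V : Type*} [DecidableEq V]

/-- Finite edge sets in which every vertex has even degree. -/
def SimpleGraph.EvenSet (G : SimpleGraph V) (S : Finset (Sym2 V)) : Prop :=
  (∀ e ∈ S, e ∈ G.edgeSet) ∧ ∀ v : V, Even (S.filter (fun e => v ∈ e)).card

lemma SimpleGraph.EvenSet.symmDiff {G : SimpleGraph V} {S T : Finset (Sym2 V)}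
    (hS : G.EvenSet S) (hT : G.EvenSet T) : G.EvenSet (symmDiff S T) := by
  refine ⟨?_, ?_⟩
  · intro e he
    rw [Finset.mem_symmDiff] at he
    rcases he with h | h
    · exact hS.1 e h.1
    · exact hT.1 e h.1
  · intro v
    have h1 := hS.2 v
    have h2 := hT.2 v
    have h3 : (_root_.symmDiff S T).filter (fun e => v ∈ e) =
        (S.filter (fun e => v ∈ e) \ T.filter (fun e => v ∈ e)) ∪
        (T.filter (fun e => v ∈ e) \ S.filter (fun e => v ∈ e)) := by
      ext e
      simp only [Finset.mem_filter, Finset.mem_symmDiff, Finset.mem_union, Finset.mem_sdiff]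
      tauto
    rw [h3, Finset.card_union_of_disjoint disjoint_sdiff_sdiff]
    have h4 := Finset.card_sdiff_add_card_inter (S.filter (fun e => v ∈ e)) (T.filter (fun e => v ∈ e))
    have h5 := Finset.card_sdiff_add_card_inter (T.filter (fun e => v ∈ e)) (S.filter (fun e => v ∈ e))
    rw [Finset.inter_comm] at h5
    rw [Nat.even_iff] at *
    omega

lemma SimpleGraph.evenSet_of_circuit {G : SimpleGraph V} {K : Finset (Sym2 V)}
    (h : G.IsCircuit (K : Set (Sym2 V))) : G.EvenSet K := by
  obtain ⟨v, w, hw, hK⟩ := h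
  have hK' : K = w.edges.toFinset := by
    ext e
    rw [← Finset.mem_coe, hK]; simp
  subst hK'
  refine ⟨?_, ?_⟩
  · intro e he
    exact w.edges_subset_edgeSet (by simpa using he)
  · intro x
    have := (hw.isCircuit.isTrail.even_countP_edges_iff x).2 (fun h => (h rfl).elim)
    rw [List.countP_eq_length_filter] at this
    rw [← List.toFinset_card_of_nodup (hw.isCircuit.isTrail.edges_nodup.filter _)] at this
    convert this using 2
    ext e
    simp

lemma SimpleGraph.evenSet_path {G : SimpleGraph V} {u v : V} (p : G.Walk u v) (hp : p.IsPath)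
    {S : Finset (Sym2 V)} (hS : G.EvenSet S) (hsub : ∀ e ∈ S, e ∈ p.edges) : S = ∅ := by
  induction p with
  | nil => 
    rw [Finset.eq_empty_iff_forall_notMem]
    intro e he
    simpa using hsub e he
  | @cons a b c h q ih =>
    rw [SimpleGraph.Walk.cons_isPath_iff] at hp
    have key : ∀ e ∈ S, a ∈ e → e = s(a, b) := by
      intro e he hae
      have := hsub e he
      rw [SimpleGraph.Walk.edges_cons, List.mem_cons] at this
      rcases this with h' | h'
      · exact h'
      · exact (hp.2 (SimpleGraph.Walk.mem_support_of_mem_edges h' hae)).elim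
    have hno : s(a, b) ∉ S := by
      intro hmem
      have : S.filter (fun e => a ∈ e) = {s(a, b)} := by
        ext e
        simp only [Finset.mem_filter, Finset.mem_singleton]
        constructor
        · exact fun h => key e h.1 h.2
        · rintro rfl; exact ⟨hmem, by simp⟩
      have h2 := hS.2 a
      rw [this] at h2
      simp at h2
    refine ih hp.1 (fun e he => ?_)
    have := hsub e he
    rw [SimpleGraph.Walk.edges_cons, List.mem_cons] at this
    rcases this with h' | h'
    · exact (hno (h' ▸ he)).elim
    · exact h'

lemma SimpleGraph.evenSet_mini {G : SimpleGraph V} {K S : Finset (Sym2 V)}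
    (hK : G.IsCircuit (K : Set (Sym2 V))) (hS : G.EvenSet S) (hsub : S ⊆ K) : S = ∅ ∨ S = K := by
  have hKe := G.evenSet_of_circuit hK
  obtain ⟨v, w, hw, hKw⟩ := hK
  have hmem : ∀ e, e ∈ K ↔ e ∈ w.edges := by
    intro e; rw [← Finset.mem_coe, hKw]; simp
  cases w with
  | nil => exact (hw.ne_nil rfl).elim
  | @cons _ b _ h q =>
    rw [SimpleGraph.Walk.cons_isCycle_iff] at hw
    have key : ∀ R, G.EvenSet R → R ⊆ K → s(v, b) ∉ R → R = ∅ := by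
      intro R hR hRK hno
      refine SimpleGraph.evenSet_path q hw.1 hR (fun e he => ?_)
      have := (hmem e).1 (hRK he)
      rw [SimpleGraph.Walk.edges_cons, List.mem_cons] at this
      rcases this with h' | h'
      · exact (hno (h' ▸ he)).elim
      · exact h'
    by_cases hv : s(v, b) ∈ S
    · right
      have := key (_root_.symmDiff S K) (hS.symmDiff hKe) ?_ ?_
      · rwa [← Finset.bot_eq_empty, symmDiff_eq_bot] at this
      · intro e; have := @hsub e; simp only [Finset.mem_symmDiff]; tauto
      · have := @hsub _ hv; simp only [Finset.mem_symmDiff]; tauto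
    · left; exact key S hS hsub hv

lemma SimpleGraph.evenSet_ex {G : SimpleGraph V} {S : Finset (Sym2 V)}
    (hS : G.EvenSet S) {s : Sym2 V} (hs : s ∈ S) :
    ∃ K : Finset (Sym2 V), G.IsCircuit (K : Set (Sym2 V)) ∧ K ⊆ S ∧ s ∈ K := by
  classical
  induction s using Sym2.ind with
  | _ u v =>
  have huv : G.Adj u v := hS.1 _ hs
  have hne : u ≠ v := huv.ne
  obtain ⟨H, hH⟩ : ∃ H, H = SimpleGraph.fromEdgeSet (S : Set (Sym2 V)) := ⟨_, rfl⟩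
  have hHadj : ∀ a b, H.Adj a b ↔ s(a, b) ∈ S := by
    intro a b
    rw [hH, SimpleGraph.fromEdgeSet_adj]
    simp only [Finset.mem_coe, and_iff_left_iff_imp]
    intro h
    exact (show G.Adj a b from hS.1 _ h).ne
  have hHG : H ≤ G := fun a b h => hS.1 _ ((hHadj a b).1 h)
  obtain ⟨H', hH'⟩ : ∃ H', H' = H.deleteEdges {s(u, v)} := ⟨_, rfl⟩
  have hreach : H'.Reachable u v := by
    by_contra hnr
    obtain ⟨T, hT⟩ : ∃ T, T = S.erase s(u, v) := ⟨_, rfl⟩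
    have hTadj : ∀ a b, s(a, b) ∈ T → H'.Adj a b := by
      intro a b hab
      rw [hT, Finset.mem_erase] at hab
      rw [hH', SimpleGraph.deleteEdges_adj, hHadj]
      exact ⟨hab.2, by simpa using hab.1⟩
    obtain ⟨W, hW⟩ : ∃ W : Finset V, W = (insert u (T.biUnion (fun e => e.toFinset))).filter (fun x => H'.Reachable u x) := ⟨_, rfl⟩
    have hdc := Finset.sum_card_bipartiteAbove_eq_sum_card_bipartiteBelow (s := W) (t := T) (fun x e => x ∈ e)
    have hR : Even (∑ e ∈ T, (W.bipartiteBelow (fun x e => x ∈ e) e).card) := by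
      refine Finset.even_sum _ (fun e he => ?_)
      induction e using Sym2.ind with
      | _ a b =>
      have hab := hTadj a b he
      have hmW : ∀ x, x ∈ s(a, b) → (x ∈ W ↔ H'.Reachable u x) := by
        intro x hx
        rw [hW, Finset.mem_filter, and_iff_right_iff_imp]
        intro _
        rw [Finset.mem_insert, Finset.mem_biUnion]
        exact Or.inr ⟨_, he, by simpa using hx⟩
      by_cases hra : H'.Reachable u a
      · have hrb : H'.Reachable u b := hra.trans hab.reachable
        have : W.bipartiteBelow (fun x e => x ∈ e) s(a, b) = {a, b} := by
          ext x
          simp only [Finset.bipartiteBelow, Finset.mem_filter, Finset.mem_insert, Finset.mem_singleton, Sym2.mem_iff]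
          constructor
          · exact fun h => h.2
          · rintro (rfl | rfl)
            · exact ⟨(hmW _ (by simp)).2 hra, Or.inl rfl⟩
            · exact ⟨(hmW _ (by simp)).2 hrb, Or.inr rfl⟩
        rw [this, Finset.card_pair hab.ne]
        exact even_two
      · have hrb : ¬ H'.Reachable u b := fun h => hra (h.trans hab.symm.reachable)
        have : W.bipartiteBelow (fun x e => x ∈ e) s(a, b) = ∅ := by
          rw [Finset.eq_empty_iff_forall_notMem]
          intro x
          simp only [Finset.bipartiteBelow, Finset.mem_filter, Sym2.mem_iff]
          rintro ⟨h1, rfl | rfl⟩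
          · exact hra ((hmW _ (by simp)).1 h1)
          · exact hrb ((hmW _ (by simp)).1 h1)
        rw [this]; simp
    have huW : u ∈ W := by rw [hW, Finset.mem_filter]; exact ⟨by simp, SimpleGraph.Reachable.refl _⟩
    have hL : Odd (∑ x ∈ W, (T.bipartiteAbove (fun x e => x ∈ e) x).card) := by
      rw [← Finset.add_sum_erase _ _ huW]
      refine Odd.add_even ?_ (Finset.even_sum _ (fun x hx => ?_))
      · have h1 := hS.2 u
        have h2 : T.bipartiteAbove (fun x e => x ∈ e) u = (S.filter (fun e => u ∈ e)).erase s(u, v) := by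
          ext e; simp only [Finset.bipartiteAbove, hT, Finset.mem_filter, Finset.mem_erase]; tauto
        have h3 : s(u, v) ∈ S.filter (fun e => u ∈ e) := by simp [hs]
        have h4 := Finset.card_erase_add_one h3
        rw [h2]
        rw [← h4] at h1
        rw [← Nat.not_even_iff_odd]
        intro h5
        rw [Nat.even_iff] at *
        omega
      · have hxu : x ≠ u := (Finset.mem_erase.1 hx).1
        have hxW := (Finset.mem_erase.1 hx).2
        have hxv : x ≠ v := by
          rintro rfl
          rw [hW, Finset.mem_filter] at hxW
          exact hnr hxW.2
        have h2 : T.bipartiteAbove (fun x e => x ∈ e) x = S.filter (fun e => x ∈ e) := by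
          ext e
          simp only [Finset.bipartiteAbove, hT, Finset.mem_filter, Finset.mem_erase]
          constructor
          · exact fun h => ⟨h.1.2, h.2⟩
          · refine fun h => ⟨⟨?_, h.1⟩, h.2⟩
            rintro rfl
            have := h.2
            rw [Sym2.mem_iff] at this
            exact this.elim hxu hxv
        rw [h2]
        exact hS.2 x
    rw [hdc] at hL
    exact (Nat.not_even_iff_odd.2 hL) hR
  obtain ⟨x, p, hp, hmem⟩ := SimpleGraph.adj_and_reachable_delete_edges_iff_exists_cycle.1
    ⟨(hHadj u v).2 hs, hH' ▸ hreach⟩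
  refine ⟨p.edges.toFinset, ⟨x, p.mapLe hHG, hp.mapLe hHG, ?_⟩, ?_, by simpa using hmem⟩
  · ext e; simp
  · intro e he
    have := p.edges_subset_edgeSet (List.mem_toFinset.1 he)
    induction e using Sym2.ind with
    | _ a b => exact (hHadj a b).1 this

end

lemma SimpleGraph.binSys {V : Type*} [DecidableEq V] (G : SimpleGraph V) :
    BinSys (fun S => G.EvenSet S) (fun K : Finset (Sym2 V) => G.IsCircuit (K : Set (Sym2 V))) where
  symm := fun _ _ hS hT => hS.symmDiff hT
  ev := fun _ hK => G.evenSet_of_circuit hK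
  ne := by
    rintro K ⟨v, w, hw, hK⟩
    cases w with
    | nil => exact (hw.ne_nil rfl).elim
    | @cons _ b _ h q =>
      refine ⟨s(v, b), ?_⟩
      rw [← Finset.mem_coe, hK]
      simp
  ex := fun _ hS _ hs => G.evenSet_ex hS hs
  mini := fun _ _ hK hS h => G.evenSet_mini hK hS h

/-- Let `f : G → G'` be a circuit surjection with `G` 2-connected and
`G'` not a circuit.  Then for every edge `e` of `G'`, any circuit `C` of `G` containing
at least one element of `f⁻¹(e)` contains every element of `f⁻¹(e)`. -/
theorem stmt_3 {V V' : Type*} (G : SimpleGraph V) (G' : SimpleGraph V')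
    (f : Sym2 V → Sym2 V')
    (hmap : Set.MapsTo f G.edgeSet G'.edgeSet)
    (hsurj : Set.SurjOn f G.edgeSet G'.edgeSet)
    (hcirc : ∀ C, G.IsCircuit C → G'.IsCircuit (f '' C))
    (hiso : ∀ v : V', ∃ w : V', G'.Adj v w)
    (h2 : TwoConnectedE G)
    (hnotcirc : ¬ G'.IsCircuit G'.edgeSet) :
    ∀ e ∈ G'.edgeSet, ∀ C, G.IsCircuit C → (∃ x ∈ C, f x = e) →
      ∀ y ∈ G.edgeSet, f y = e → y ∈ C := by
  classical
  intro e he T hT hx y hy hfy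
  obtain ⟨x, hxT, hfx⟩ := hx
  have hfin : ∀ K, G.IsCircuit K → ∃ F : Finset (Sym2 V), (F : Set (Sym2 V)) = K := by
    rintro K ⟨v, w, -, rfl⟩
    exact ⟨w.edges.toFinset, by ext; simp⟩
  obtain ⟨F, rfl⟩ := hfin T hT
  refine Finset.mem_coe.2 (BinSys.main G.binSys G'.binSys f ?_ G.edgeSet ?_ ?_ ?_ hT
    (Finset.mem_coe.1 hxT) hy (hfx.trans hfy.symm))
  · intro K hK
    rw [Finset.coe_image]
    exact hcirc _ hK
  · intro K hK a ha
    exact (G.evenSet_of_circuit hK).1 a ha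
  · intro a ha b hb hab
    obtain ⟨K, hK, h1, h2⟩ := h2 a ha b hb hab
    obtain ⟨F', rfl⟩ := hfin K hK
    exact ⟨F', hK, h1, h2⟩
  · intro K hK
    by_contra! hcon
    apply hnotcirc
    have : G'.edgeSet = f '' (K : Set (Sym2 V)) := by
      apply Set.Subset.antisymm
      · intro e' he'
        obtain ⟨a, ha, rfl⟩ := hsurj he'
        have := hcon a ha
        rwa [← Finset.mem_coe, Finset.coe_image] at this
      · rintro _ ⟨a, ha, rfl⟩
        exact hmap ((G.evenSet_of_circuit hK).1 a ha)
    rw [this]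
    exact hcirc _ hK
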